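/- Let S be an ordered semigroup with real multiplication satisfying axioms O1–O6 and having a countable dense subset. Then for all f, g, h ∈ S, (f ∧ g) + h = (f + h) ∧ (g + h), where ∧ denotes the greatest lower bound in S. -/

import Mathlib

open scoped ENNReal

/-- `CC s t` : `s` is (sequentially) compactly contained in `t`, written `s ≪ t`. -/
def CC {S : Type*} [AddCommMonoid S] [PartialOrder S] (s t : S) : Prop :=
  ∀ u : ℕ → S, Monotone u → ∀ x : S, IsLUB (Set.range u) x → t ≤ x → ∃ n, s ≤ u n

/-- An ordered semigroup (positive, with translation invariant order) satisfying axioms O1-O5. -/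
structure CuO5 (S : Type*) [AddCommMonoid S] [PartialOrder S] : Prop where
  addRightMono : ∀ {s t : S}, s ≤ t → ∀ r : S, s + r ≤ t + r
  zeroLe : ∀ s : S, 0 ≤ s
  O1 : ∀ u : ℕ → S, Monotone u → ∃ x : S, IsLUB (Set.range u) x
  O2 : ∀ s : S, ∃ u : ℕ → S, (∀ n, CC (u n) (u (n + 1))) ∧ IsLUB (Set.range u) s
  O3 : ∀ {s₁ t₁ s₂ t₂ : S}, CC s₁ t₁ → CC s₂ t₂ → CC (s₁ + s₂) (t₁ + t₂)
  O4 : ∀ u v : ℕ → S, Monotone u → Monotone v → ∀ x y : S,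
    IsLUB (Set.range u) x → IsLUB (Set.range v) y →
    IsLUB (Set.range fun n => u n + v n) (x + y)
  O5 : ∀ {s' s t : S}, CC s' s → s ≤ t → ∃ r : S, s' + r ≤ t ∧ t ≤ s + r

/-- Axioms O1-O6. -/
structure CuO6 (S : Type*) [AddCommMonoid S] [PartialOrder S] extends CuO5 S : Prop where
  O6 : ∀ {s r t : S}, s ≤ r + t → ∀ {s' : S}, CC s' s →
    ∃ r' t' : S, s' ≤ r' + t' ∧ r' ≤ r ∧ r' ≤ s ∧ t' ≤ t ∧ t' ≤ s

/-- A functional on `S`: additive, order preserving, zero preserving map to `[0,∞]`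
preserving suprema of increasing sequences. -/
structure IsFunctional {S : Type*} [AddCommMonoid S] [PartialOrder S] (l : S → ℝ≥0∞) : Prop where
  map_zero : l 0 = 0
  map_add : ∀ s t : S, l (s + t) = l s + l t
  mono : ∀ {s t : S}, s ≤ t → l s ≤ l t
  map_sup : ∀ u : ℕ → S, Monotone u → ∀ x : S, IsLUB (Set.range u) x → l x = ⨆ n, l (u n)

/-- Real multiplication on `S` : a map `(0,∞] × S → S` additive, order preserving and
sup-(of increasing sequences)-preserving in each variable, with `1 · s = s`.
Scalars are elements of `ℝ≥0∞` required to be positive. -/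
structure RealMul (S : Type*) [AddCommMonoid S] [PartialOrder S] where
  smul : ℝ≥0∞ → S → S
  add_left : ∀ {a b : ℝ≥0∞}, 0 < a → 0 < b → ∀ s : S, smul (a + b) s = smul a s + smul b s
  add_right : ∀ {a : ℝ≥0∞}, 0 < a → ∀ s t : S, smul a (s + t) = smul a s + smul a t
  mono_left : ∀ {a b : ℝ≥0∞}, 0 < a → a ≤ b → ∀ s : S, smul a s ≤ smul b s
  mono_right : ∀ {a : ℝ≥0∞}, 0 < a → ∀ {s t : S}, s ≤ t → smul a s ≤ smul a t
  sup_left : ∀ u : ℕ → ℝ≥0∞, Monotone u → 0 < u 0 → ∀ s : S,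
    IsLUB (Set.range fun n => smul (u n) s) (smul (⨆ n, u n) s)
  sup_right : ∀ {a : ℝ≥0∞}, 0 < a → ∀ u : ℕ → S, Monotone u → ∀ x : S,
    IsLUB (Set.range u) x → IsLUB (Set.range fun n => smul a (u n)) (smul a x)
  one_smul : ∀ s : S, smul 1 s = s

/-- `D` is a dense subset of `S`: every element of `S` is the supremum of a rapidly
increasing sequence of elements of `D`. -/
def IsDenseSub {S : Type*} [AddCommMonoid S] [PartialOrder S] (D : Set S) : Prop :=
  ∀ s : S, ∃ u : ℕ → S, (∀ n, u n ∈ D) ∧ (∀ n, CC (u n) (u (n + 1))) ∧ IsLUB (Set.range u) s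

/-- `m` is the least upper bound of the functionals `l₁` and `l₂` in `F(S)`
(pointwise order). -/
def IsFSup {S : Type*} [AddCommMonoid S] [PartialOrder S] (l₁ l₂ m : S → ℝ≥0∞) : Prop :=
  IsFunctional m ∧ (∀ s, l₁ s ≤ m s) ∧ (∀ s, l₂ s ≤ m s) ∧
    ∀ d : S → ℝ≥0∞, IsFunctional d → (∀ s, l₁ s ≤ d s) → (∀ s, l₂ s ≤ d s) → ∀ s, m s ≤ d s

/-- `m` is the greatest lower bound of the functionals `l₁` and `l₂` in `F(S)`
(pointwise order). -/
def IsFInf {S : Type*} [AddCommMonoid S] [PartialOrder S] (l₁ l₂ m : S → ℝ≥0∞) : Prop :=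
  IsFunctional m ∧ (∀ s, m s ≤ l₁ s) ∧ (∀ s, m s ≤ l₂ s) ∧
    ∀ d : S → ℝ≥0∞, IsFunctional d → (∀ s, d s ≤ l₁ s) → (∀ s, d s ≤ l₂ s) → ∀ s, d s ≤ m s

/-- An isomorphism of ordered semigroups between `S` and the extended natural numbers. -/
def IsOrdSemigroupIso {S : Type*} [AddCommMonoid S] [PartialOrder S] (e : S ≃ ℕ∞) : Prop :=
  (∀ a b : S, e (a + b) = e a + e b) ∧ e 0 = 0 ∧ ∀ a b : S, a ≤ b ↔ e a ≤ e b

/-!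
Real multiplication gives `S` approximate cancellation: if `x + z ≤ y + z` and `z ≤ n • w`, then
`x ≤ y + w`. Together with O5 and O6 this yields an approximate Riesz decomposition: if `q ≤ f + h`,
then `q` is, up to a small error, a sum `a + r` with `a ≤ f` and `r` below `h`. If also `q ≤ g + h`,
then cancelling `r` from `a + r ≤ g + h` shows that `a` lies below `g + (h - r)`, hence below
`(f ∧ g) + (h - r)`, and adding `r` back gives `q ≤ (f ∧ g) + h` up to a multiple of `q / n`. The
crude bound `q ≤ (f ∧ g) + 2 • h`, which O6 gives without cancellation, turns this error into a
small multiple of `(f ∧ g) + h`, and it disappears as `n → ∞`.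
-/

theorem nsmul_add_le_nsmul_add_of_add_le_add {M : Type*} [AddCommMonoid M] [Preorder M]
    [IsOrderedAddMonoid M] {x y z : M} (h : x + z ≤ y + z) (n : ℕ) :
    n • x + z ≤ n • y + z := by
  induction n with
  | zero => simp
  | succ n ih =>
    calc (n + 1) • x + z = n • x + (x + z) := by rw [succ_nsmul, add_assoc]
      _ ≤ n • x + (y + z) := by gcongr
      _ = y + (n • x + z) := add_left_comm ..
      _ ≤ y + (n • y + z) := by gcongr
      _ = (n + 1) • y + z := by rw [succ_nsmul', add_assoc]

theorem exists_natCast_add_mul_le_natCast {a : ℝ≥0∞} (ha : a < 1) (k : ℕ) :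
    ∃ n : ℕ, n ≠ 0 ∧ ((n + k : ℕ) : ℝ≥0∞) * a ≤ n := by
  lift a to NNReal using ha.ne_top
  have ha' : (a : ℝ) < 1 := mod_cast ha
  obtain ⟨n, hn⟩ := exists_nat_gt (k * a / (1 - a) : ℝ)
  have hlt : (k * a : ℝ) < n * (1 - a) := (div_lt_iff₀ (sub_pos.2 ha')).1 hn
  have hn0 : (0 : ℝ) < n := pos_of_mul_pos_left (hlt.trans_le' (by positivity)) (sub_pos.2 ha').le
  have hle : ((n + k : ℕ) : ℝ) * a ≤ n := by
    push_cast
    linarith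
  exact ⟨n, by exact_mod_cast hn0.ne', mod_cast hle⟩

section

variable {S : Type*} [AddCommMonoid S] [PartialOrder S]

namespace CC

theorem le {s t : S} (h : CC s t) : s ≤ t :=
  (h (fun _ => t) monotone_const t (by simp) le_rfl).elim fun _ => id

theorem trans_le {s t r : S} (h : CC s t) (htr : t ≤ r) : CC s r :=
  fun u hu x hx hrx => h u hu x hx (htr.trans hrx)

theorem of_le {s t r : S} (hst : s ≤ t) (h : CC t r) : CC s r := fun u hu x hx hrx =>
  (h u hu x hx hrx).imp fun _ => hst.trans

theorem monotone_of_succ {u : ℕ → S} (hu : ∀ n, CC (u n) (u (n + 1))) : Monotone u :=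
  monotone_nat_of_le_succ fun n => (hu n).le

theorem of_isLUB {u : ℕ → S} (hu : ∀ n, CC (u n) (u (n + 1))) {s : S}
    (hs : IsLUB (Set.range u) s) (n : ℕ) : CC (u n) s :=
  (hu n).trans_le (hs.1 ⟨n + 1, rfl⟩)

end CC

namespace CuO5

theorem isOrderedAddMonoid (hS : CuO5 S) : IsOrderedAddMonoid S where
  add_le_add_left _ _ h r := hS.addRightMono h r

theorem cc_sum (hS : CuO5 S) {ι : Type*} (I : Finset ι) {a b : ι → S}
    (h : ∀ i, CC (a i) (b i)) : CC (∑ i ∈ I, a i) (∑ i ∈ I, b i) :=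
  Finset.sum_hom_rel (fun u _ _ _ _ => ⟨0, hS.zeroLe (u 0)⟩) fun i _ _ => hS.O3 (h i)

theorem exists_cc_between (hS : CuO5 S) {s t : S} (h : CC s t) : ∃ r, CC s r ∧ CC r t := by
  obtain ⟨u, hu, ht⟩ := hS.O2 t
  obtain ⟨n, hn⟩ := h u (CC.monotone_of_succ hu) t ht le_rfl
  exact ⟨u (n + 1), .of_le hn (hu n), CC.of_isLUB hu ht _⟩

theorem le_of_forall_cc (hS : CuO5 S) {s t : S} (h : ∀ r, CC r s → r ≤ t) : s ≤ t := by
  obtain ⟨u, hu, hs⟩ := hS.O2 s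
  exact hs.2 (Set.forall_mem_range.2 fun n => h _ (CC.of_isLUB hu hs n))

theorem exists_cc_le_add_right (hS : CuO5 S) {s t a b : S} (hst : CC s t) (ht : t ≤ a + b) :
    ∃ b', CC b' b ∧ s ≤ a + b' := by
  obtain ⟨u, hu, hb⟩ := hS.O2 b
  have := hS.isOrderedAddMonoid
  have hum := CC.monotone_of_succ hu
  obtain ⟨k, hk⟩ := hst _ (fun i j hij => add_le_add_right (hum hij) a) _
    (hS.O4 (fun _ => a) u monotone_const hum a b (by simp) hb) ht
  exact ⟨u k, CC.of_isLUB hu hb k, hk⟩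

end CuO5

namespace RealMul

theorem nsmul_smul (rm : RealMul S) {n : ℕ} (hn : n ≠ 0) {a : ℝ≥0∞} (ha : 0 < a) (s : S) :
    n • rm.smul a s = rm.smul (n * a) s := by
  induction n, Nat.one_le_iff_ne_zero.2 hn using Nat.le_induction with
  | base => simp
  | succ n hn1 ih =>
    have hn' : n ≠ 0 := Nat.one_le_iff_ne_zero.1 hn1
    have hpos : 0 < (n : ℝ≥0∞) * a := ENNReal.mul_pos (mod_cast hn') ha.ne'
    rw [succ_nsmul, ih hn', Nat.cast_succ, add_mul, one_mul, rm.add_left hpos ha]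

theorem natCast_smul (rm : RealMul S) {n : ℕ} (hn : n ≠ 0) (s : S) : rm.smul n s = n • s := by
  rw [← mul_one (n : ℝ≥0∞), ← rm.nsmul_smul hn one_pos, rm.one_smul]

theorem smul_nsmul (rm : RealMul S) {n : ℕ} (hn : n ≠ 0) {a : ℝ≥0∞} (ha : 0 < a) (s : S) :
    rm.smul a (n • s) = n • rm.smul a s := by
  induction n, Nat.one_le_iff_ne_zero.2 hn using Nat.le_induction with
  | base => simp
  | succ n hn1 ih =>
    rw [succ_nsmul, rm.add_right ha, ih (Nat.one_le_iff_ne_zero.1 hn1), succ_nsmul]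

theorem nsmul_inv_smul (rm : RealMul S) {n : ℕ} (hn : n ≠ 0) (s : S) :
    n • rm.smul (n : ℝ≥0∞)⁻¹ s = s := by
  rw [rm.nsmul_smul hn (by simp), ENNReal.mul_inv_cancel (mod_cast hn) (by simp), rm.one_smul]

theorem le_of_nsmul_le_nsmul (rm : RealMul S) {n : ℕ} (hn : n ≠ 0) {s t : S}
    (h : n • s ≤ n • t) : s ≤ t := by
  have hpos : 0 < (n : ℝ≥0∞)⁻¹ := by simp
  simpa only [rm.smul_nsmul hn hpos, rm.nsmul_inv_smul hn] using rm.mono_right hpos h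

theorem le_of_forall_smul_le (rm : RealMul S) {x y : S}
    (h : ∀ a : ℝ≥0∞, 0 < a → a < 1 → rm.smul a x ≤ y) : x ≤ y := by
  obtain ⟨u, hu, hu01, hlim⟩ := exists_seq_strictMono_tendsto' (one_pos (α := ℝ≥0∞))
  have hlub := rm.sup_left u hu.monotone (hu01 0).1 x
  rw [iSup_eq_of_tendsto hu.monotone hlim, rm.one_smul] at hlub
  exact hlub.2 (Set.forall_mem_range.2 fun n => h _ (hu01 n).1 (hu01 n).2)

theorem le_of_forall_nsmul_le (rm : RealMul S) {x y : S} (k : ℕ)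
    (h : ∀ n : ℕ, n ≠ 0 → n • x ≤ (n + k) • y) : x ≤ y := by
  refine rm.le_of_forall_smul_le fun a ha ha1 => ?_
  obtain ⟨n, hn, hna⟩ := exists_natCast_add_mul_le_natCast ha1 k
  have hnk : n + k ≠ 0 := by omega
  have hpos : 0 < ((n + k : ℕ) : ℝ≥0∞) * a := ENNReal.mul_pos (mod_cast hnk) ha.ne'
  refine rm.le_of_nsmul_le_nsmul hnk ?_
  calc (n + k) • rm.smul a x = rm.smul ((n + k : ℕ) * a) x := rm.nsmul_smul hnk ha x
    _ ≤ rm.smul n x := rm.mono_left hpos hna x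
    _ = n • x := rm.natCast_smul hn x
    _ ≤ (n + k) • y := h n hn

theorem le_add_of_add_le_add [IsOrderedAddMonoid S] (rm : RealMul S) {n : ℕ} (hn : n ≠ 0)
    {x y z w : S} (h : x + z ≤ y + z) (hz : 0 ≤ z) (hzw : z ≤ n • w) : x ≤ y + w := by
  refine rm.le_of_nsmul_le_nsmul hn ?_
  calc n • x ≤ n • x + z := le_add_of_nonneg_right hz
    _ ≤ n • y + z := nsmul_add_le_nsmul_add_of_add_le_add h n
    _ ≤ n • y + n • w := by gcongr
    _ = n • (y + w) := (nsmul_add y w n).symm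

theorem isLUB_nsmul (rm : RealMul S) {n : ℕ} (hn : n ≠ 0) {u : ℕ → S} (hu : Monotone u) {x : S}
    (hx : IsLUB (Set.range u) x) : IsLUB (Set.range fun k => n • u k) (n • x) := by
  simpa only [rm.natCast_smul hn] using rm.sup_right (Nat.cast_pos.2 hn.pos) u hu x hx

theorem cc_inv_smul [IsOrderedAddMonoid S] (rm : RealMul S) {n : ℕ} (hn : n ≠ 0) {s t : S}
    (h : CC s t) : CC (rm.smul (n : ℝ≥0∞)⁻¹ s) (rm.smul (n : ℝ≥0∞)⁻¹ t) := by
  intro u hu x hx htx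
  have htx' : t ≤ n • x := by
    simpa only [rm.nsmul_inv_smul hn] using nsmul_le_nsmul_right htx n
  obtain ⟨k, hk⟩ := h _ (fun i j hij => nsmul_le_nsmul_right (hu hij) n) _
    (rm.isLUB_nsmul hn hu hx) htx'
  exact ⟨k, rm.le_of_nsmul_le_nsmul hn (by rwa [rm.nsmul_inv_smul hn])⟩

theorem exists_cc_le_add (rm : RealMul S) (hS : CuO5 S) {n : ℕ} (hn : n ≠ 0) {x' x w : S}
    (hx : CC x' x) (hw : x ≤ n • w) : ∃ b c, CC b c ∧ x' ≤ b ∧ c ≤ x ∧ c ≤ b + w := by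
  have := hS.isOrderedAddMonoid
  obtain ⟨u, hu, hux⟩ := hS.O2 x
  obtain ⟨k, hk⟩ := hx u (CC.monotone_of_succ hu) x hux le_rfl
  let e : ℕ → S := fun i => rm.smul (n : ℝ≥0∞)⁻¹ (u (k + i))
  have hne : ∀ i, n • e i = u (k + i) := fun i => rm.nsmul_inv_smul hn _
  have he : ∀ i, CC (e i) (e (i + 1)) := fun i => rm.cc_inv_smul hn (hu (k + i))
  have hmono : Monotone e := CC.monotone_of_succ he
  have hew : ∀ i, e i ≤ w := fun i =>
    rm.le_of_nsmul_le_nsmul hn ((hne i).trans_le ((hux.1 ⟨_, rfl⟩).trans hw))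
  -- Passing from the first sum to the second only replaces the summand `e 0` by `e n ≤ w`.
  refine ⟨∑ i ∈ Finset.range n, e i, ∑ i ∈ Finset.range n, e (i + 1), hS.cc_sum _ he, ?_, ?_, ?_⟩
  · calc x' ≤ n • e 0 := hk.trans_eq (hne 0).symm
      _ ≤ ∑ i ∈ Finset.range n, e i := by
        simpa using Finset.card_nsmul_le_sum (Finset.range n) e _ fun i _ => hmono i.zero_le
  · calc ∑ i ∈ Finset.range n, e (i + 1) ≤ n • e n := by
          simpa using Finset.sum_le_card_nsmul (Finset.range n) (fun i => e (i + 1)) (e n)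
            fun i hi => hmono (Finset.mem_range.1 hi)
      _ ≤ x := (hne n).trans_le (hux.1 ⟨_, rfl⟩)
  · calc ∑ i ∈ Finset.range n, e (i + 1) ≤ ∑ i ∈ Finset.range n, e (i + 1) + e 0 :=
          le_add_of_nonneg_right (hS.zeroLe _)
      _ = ∑ i ∈ Finset.range n, e i + e n := by
        rw [← Finset.sum_range_succ', Finset.sum_range_succ]
      _ ≤ ∑ i ∈ Finset.range n, e i + w := by gcongr; exact hew n

theorem exists_add_le_le_add_add (rm : RealMul S) (hS : CuO5 S) {n : ℕ} (hn : n ≠ 0)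
    {z' z t w : S} (hz : CC z' z) (hzt : z ≤ t) (hw : z ≤ n • w) :
    ∃ a r, z' ≤ a ∧ a ≤ z ∧ a + r ≤ t ∧ t ≤ a + r + w := by
  have := hS.isOrderedAddMonoid
  obtain ⟨a, c, hac, hza, hcz, hcw⟩ := rm.exists_cc_le_add hS hn hz hw
  obtain ⟨r, har, hcr⟩ := hS.O5 hac (hcz.trans hzt)
  refine ⟨a, r, hza, hac.le.trans hcz, har, ?_⟩
  calc t ≤ c + r := hcr
    _ ≤ a + w + r := by gcongr
    _ = a + r + w := add_right_comm a w r

end RealMul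

namespace CuO6

theorem exists_approx_riesz (hS : CuO6 S) (rm : RealMul S) {n : ℕ} (hn : n ≠ 0) {x' x f h w : S}
    (hx : CC x' x) (hxfh : x ≤ f + h) (hw : x ≤ n • w) :
    ∃ a r, a ≤ f ∧ r ≤ h + 2 • w ∧ a + r ≤ x ∧ x' ≤ a + r + w := by
  have := hS.isOrderedAddMonoid
  obtain ⟨b, c, hbc, hxb, hcx, hcw⟩ := rm.exists_cc_le_add hS.toCuO5 hn hx hw
  obtain ⟨b', hbb', hb'c⟩ := hS.exists_cc_between hbc
  obtain ⟨z, d, hb'zd, hzf, hzc, hdh, -⟩ := hS.O6 (hcx.trans hxfh) hb'c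
  obtain ⟨z', hz'z, hbz'⟩ := hS.exists_cc_le_add_right hbb' (hb'zd.trans_eq (add_comm z d))
  obtain ⟨a, r, hz'a, haz, harc, hcar⟩ :=
    rm.exists_add_le_le_add_add hS.toCuO5 hn hz'z hzc (hzc.trans (hcx.trans hw))
  have hra : r + a ≤ h + w + a :=
    calc r + a = a + r := add_comm r a
      _ ≤ c := harc
      _ ≤ b + w := hcw
      _ ≤ h + a + w := by
        gcongr
        exact hbz'.trans (add_le_add hdh hz'a)
      _ = h + w + a := add_right_comm h a w
  have hrh : r ≤ h + w + w := rm.le_add_of_add_le_add hn hra (hS.zeroLe a)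
    (haz.trans (hzc.trans (hcx.trans hw)))
  exact ⟨a, r, haz.trans hzf, hrh.trans_eq (by rw [add_assoc, two_nsmul]), harc.trans hcx,
    hxb.trans (hbc.le.trans hcar)⟩

theorem le_inf_add (hS : CuO6 S) {f g p a k : S} (hp : IsGLB {f, g} p) (haf : a ≤ f)
    (hag : a ≤ g + k) : a ≤ p + k := by
  have := hS.isOrderedAddMonoid
  refine hS.le_of_forall_cc fun a' ha' => ?_
  obtain ⟨e, t, haet, heg, hea, htk, -⟩ := hS.O6 hag ha'
  have hep : e ≤ p := hp.2 (by simp [hea.trans haf, heg])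
  exact haet.trans (add_le_add hep htk)

theorem le_inf_add_add (hS : CuO6 S) {f g p q h k : S} (hp : IsGLB {f, g} p) (hqf : q ≤ f + h)
    (hqg : q ≤ g + k) : q ≤ p + (h + k) := by
  have := hS.isOrderedAddMonoid
  refine hS.le_of_forall_cc fun q' hq' => ?_
  obtain ⟨a, b, hqab, haf, haq, hbh, -⟩ := hS.O6 hqf hq'
  calc q' ≤ a + b := hqab
    _ ≤ p + k + h := add_le_add (hS.le_inf_add hp haf (haq.trans hqg)) hbh
    _ = p + (h + k) := by rw [add_assoc, add_comm k]

theorem le_inf_add_add_nsmul (hS : CuO6 S) (rm : RealMul S) {n : ℕ} (hn : n ≠ 0)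
    {f g p q h w : S} (hp : IsGLB {f, g} p) (hqf : q ≤ f + h) (hqg : q ≤ g + h)
    (hw : q ≤ n • w) : q ≤ p + h + 4 • w := by
  have := hS.isOrderedAddMonoid
  refine hS.le_of_forall_cc fun x' hx' => ?_
  obtain ⟨x, hx'x, hxq⟩ := hS.exists_cc_between hx'
  obtain ⟨a, r, haf, hrh, harq, hxar⟩ := hS.exists_approx_riesz rm hn hxq hqf hw
  obtain ⟨r', hr'r, hx'r'⟩ :=
    hS.exists_cc_le_add_right hx'x (hxar.trans_eq (add_right_comm a r w))
  obtain ⟨k, hr'k, hrk⟩ := hS.O5 hr'r hrh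
  have har : a + r ≤ g + k + r :=
    calc a + r ≤ q := harq
      _ ≤ g + h := hqg
      _ ≤ g + (h + 2 • w) := by gcongr; exact le_add_of_nonneg_right (nsmul_nonneg (hS.zeroLe w) 2)
      _ ≤ g + (r + k) := by gcongr
      _ = g + k + r := by rw [add_comm r, add_assoc]
  have hrw : r ≤ n • w := (le_add_of_nonneg_left (hS.zeroLe a)).trans (harq.trans hw)
  have hag : a ≤ g + (k + w) :=
    (rm.le_add_of_add_le_add hn har (hS.zeroLe r) hrw).trans_eq (add_assoc g k w)
  calc x' ≤ a + w + r' := hx'r'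
    _ ≤ p + (k + w) + w + r' := by gcongr; exact hS.le_inf_add hp haf hag
    _ = p + (r' + k) + 2 • w := by rw [two_nsmul]; abel
    _ ≤ p + (h + 2 • w) + 2 • w := by gcongr
    _ = p + h + 4 • w := by abel

end CuO6

theorem inf_add_shift_general (hS : CuO6 S) (rm : RealMul S) {f g p : S}
    (hp : IsGLB {f, g} p) (h : S) : IsGLB {f + h, g + h} (p + h) := by
  have := hS.isOrderedAddMonoid
  refine ⟨?_, fun q hq => rm.le_of_forall_nsmul_le 8 fun n hn => ?_⟩
  · have hpf : p ≤ f := hp.1 (by simp)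
    have hpg : p ≤ g := hp.1 (by simp)
    simpa using ⟨add_le_add_left hpf h, add_le_add_left hpg h⟩
  have hqf : q ≤ f + h := hq (by simp)
  have hqg : q ≤ g + h := hq (by simp)
  have hq2 : q ≤ 2 • (p + h) :=
    calc q ≤ p + (h + h) := hS.le_inf_add_add hp hqf hqg
      _ ≤ p + (h + h) + p := le_add_of_nonneg_right (hS.zeroLe p)
      _ = 2 • (p + h) := by rw [two_nsmul]; abel
  let w := rm.smul (n : ℝ≥0∞)⁻¹ (2 • (p + h))
  have hw : n • w = 2 • (p + h) := rm.nsmul_inv_smul hn _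
  calc n • q ≤ n • (p + h + 4 • w) :=
        nsmul_le_nsmul_right (hS.le_inf_add_add_nsmul rm hn hp hqf hqg (hq2.trans_eq hw.symm)) n
    _ = n • (p + h) + 4 • (n • w) := by rw [nsmul_add, nsmul_left_comm]
    _ = (n + 8) • (p + h) := by rw [hw, ← mul_nsmul', add_nsmul]

end

/-- `(f ∧ g) + h = (f + h) ∧ (g + h)`. -/
theorem inf_add_shift {S : Type*} [AddCommMonoid S] [PartialOrder S]
    (hS : CuO6 S) (rm : RealMul S) (hd : ∃ D : Set S, D.Countable ∧ IsDenseSub D)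
    (f g h p q : S) (hp : IsGLB ({f, g} : Set S) p)
    (hq : IsGLB ({f + h, g + h} : Set S) q) :
    q = p + h :=
  hq.unique (inf_add_shift_general hS rm hp h)
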